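/- arXiv:2303.03970 — 2 statements merged into one kernel-verified Lean document; each statement's English description precedes it below -/
import Mathlib

section
/- Let f : (G, P_G) → (H, P_H) be a regular epimorphism of preordered groups, and let π₁ : (Eq(f), Eq(f)⁺) → (G, P_G) denote the first projection of its kernel pair. Then Condition (⋆) holds for π₁ if and only if Condition (⋆) holds for f. -/
/-- The pullback of two group homomorphisms `φ : G →* K` and `ψ : A →* K`,
as a subgroup of `G × A`. -/
def pullbackSubgroup {G A K : Type*} [Group G] [Group A] [Group K]
    (φ : G →* K) (ψ : A →* K) : Subgroup (G × A) where
  carrier := {x | φ x.1 = ψ x.2}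
  one_mem' := by simp
  mul_mem' := by
    intro a b ha hb
    simp only [Set.mem_setOf_eq, Prod.fst_mul, Prod.snd_mul, map_mul] at *
    rw [ha, hb]
  inv_mem' := by
    intro a ha
    simp only [Set.mem_setOf_eq, Prod.fst_inv, Prod.snd_inv, map_inv] at *
    rw [ha]

/-- The positive cone of a subgroup `S ≤ G × A` induced by positive cones
`P ⊆ G` and `Q ⊆ A`. -/
def subCone {G A : Type*} [Group G] [Group A] (S : Subgroup (G × A))
    (P : Submonoid G) (Q : Submonoid A) : Submonoid S where
  carrier := {x | (x : G × A).1 ∈ P ∧ (x : G × A).2 ∈ Q}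
  one_mem' := ⟨P.one_mem, Q.one_mem⟩
  mul_mem' := fun ha hb => ⟨P.mul_mem ha.1 hb.1, Q.mul_mem ha.2 hb.2⟩

/-- The kernel pair `Eq(f) = {(x,y) | f x = f y}` of `f : G →* H`. -/
def kerPair {G H : Type*} [Group G] [Group H] (f : G →* H) : Subgroup (G × G) :=
  pullbackSubgroup f f

/-- The positive cone `Eq(f)⁺` of the kernel pair of a morphism of preordered
groups `f : (G,P) → (H,P_H)`. -/
def kerPairCone {G H : Type*} [Group G] [Group H] (f : G →* H) (P : Submonoid G) :
    Submonoid ↥(kerPair f) :=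
  subCone (kerPair f) P P

/-- The first projection `π₁ : Eq(f) →* G` of the kernel pair of `f`. -/
def kerPairFst {G H : Type*} [Group G] [Group H] (f : G →* H) : ↥(kerPair f) →* G :=
  (MonoidHom.fst G G).comp (kerPair f).subtype

/-- Condition (⋆) for a morphism of preordered groups `f : (G, P) → (H, P_H)`:
for all `a, b, c ∈ P` with `a·b⁻¹ ∈ [G,G]` and `f b = f c`, one has `a·b⁻¹·c ∈ P`. -/
def StarCond {G H : Type*} [Group G] [Group H] (P : Submonoid G) (f : G →* H) : Prop :=
  ∀ a b c : G, a ∈ P → b ∈ P → c ∈ P → a * b⁻¹ ∈ commutator G → f b = f c →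
    a * b⁻¹ * c ∈ P

section Pullback

variable {G A K : Type*} [Group G] [Group A] [Group K]

theorem map_mem_commutator (φ : G →* K) {x : G} (hx : x ∈ commutator G) :
    φ x ∈ commutator K := by
  have map_le : (commutator G).map φ ≤ commutator K :=
    (map_commutator_eq G φ).trans_le (Subgroup.commutator_mono le_top le_top)
  exact map_le (Subgroup.mem_map_of_mem φ hx)

/-- The projection onto `G` of the pullback of `φ : G →* K` and `ψ : A →* K`. For `φ = ψ = f` it is
definitionally `kerPairFst f`. -/
def pullbackFst (φ : G →* K) (ψ : A →* K) : pullbackSubgroup φ ψ →* G :=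
  (MonoidHom.fst G A).comp (pullbackSubgroup φ ψ).subtype

/-- The projection onto `A` of the pullback of `φ : G →* K` and `ψ : A →* K`. -/
def pullbackSnd (φ : G →* K) (ψ : A →* K) : pullbackSubgroup φ ψ →* A :=
  (MonoidHom.snd G A).comp (pullbackSubgroup φ ψ).subtype

/-- The homomorphism into the pullback of `φ` and `ψ` given by its universal property. -/
def pullbackLift {X : Type*} [Group X] {φ : G →* K} {ψ : A →* K} (u : X →* G) (v : X →* A)
    (h : φ.comp u = ψ.comp v) : X →* pullbackSubgroup φ ψ :=
  (u.prod v).codRestrict (pullbackSubgroup φ ψ) (DFunLike.congr_fun h)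

variable {P : Submonoid G} {Q : Submonoid A} {φ : G →* K} {ψ : A →* K}

theorem starCond_pullbackFst (hψ : StarCond Q ψ) :
    StarCond (subCone (pullbackSubgroup φ ψ) P Q) (pullbackFst φ ψ) := by
  rintro a b c ⟨ha₁, ha₂⟩ ⟨-, hb₂⟩ ⟨-, hc₂⟩ hab (hbc : b.1.1 = c.1.1)
  have fst_mem : a.1.1 * b.1.1⁻¹ * c.1.1 ∈ P := by
    rwa [← hbc, inv_mul_cancel_right]
  have hab₂ : a.1.2 * b.1.2⁻¹ ∈ commutator A := map_mem_commutator (pullbackSnd φ ψ) hab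
  have hbc₂ : ψ b.1.2 = ψ c.1.2 :=
    calc
      ψ b.1.2 = φ b.1.1 := b.2.symm
      _ = φ c.1.1 := congrArg φ hbc
      _ = ψ c.1.2 := c.2
  exact ⟨fst_mem, hψ _ _ _ ha₂ hb₂ hc₂ hab₂ hbc₂⟩

theorem starCond_of_starCond_pullbackFst (s : A →* G) (hs : φ.comp s = ψ) (hQ : Q ≤ P.comap s)
    (h : StarCond (subCone (pullbackSubgroup φ ψ) P Q) (pullbackFst φ ψ)) :
    StarCond Q ψ := by
  intro a b c ha hb hc hab hbc
  -- For the kernel pair, `s` is the identity and `graph` is the diagonal.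
  let graph : A →* pullbackSubgroup φ ψ := pullbackLift s (MonoidHom.id A) hs
  have graph_mem {x : A} (hx : x ∈ Q) : graph x ∈ subCone (pullbackSubgroup φ ψ) P Q :=
    ⟨hQ hx, hx⟩
  let c' : pullbackSubgroup φ ψ := ⟨(s b, c), (DFunLike.congr_fun hs b).trans hbc⟩
  have hc' : c' ∈ subCone (pullbackSubgroup φ ψ) P Q := ⟨hQ hb, hc⟩
  have hab' : graph a * (graph b)⁻¹ ∈ commutator (pullbackSubgroup φ ψ) := by
    simpa only [map_mul, map_inv] using map_mem_commutator graph hab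
  have fst_eq : pullbackFst φ ψ (graph b) = pullbackFst φ ψ c' := rfl
  exact (h _ _ _ (graph_mem ha) (graph_mem hb) hc' hab' fst_eq).2

end Pullback

theorem stmt5_general {G H : Type*} [Group G] [Group H] (P : Submonoid G) (f : G →* H) :
    StarCond (kerPairCone f P) (kerPairFst f) ↔ StarCond P f :=
  ⟨starCond_of_starCond_pullbackFst (MonoidHom.id G) f.comp_id le_rfl, starCond_pullbackFst⟩

/-- for a regular epimorphism of preordered groups
`f : (G,P_G) → (H,P_H)`, Condition (⋆) holds for the first projection of the
kernel pair of `f` if and only if it holds for `f`. -/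
theorem stmt5 {G H : Type*} [Group G] [Group H]
    (PG : Submonoid G) (hPG : ∀ g : G, ∀ x ∈ PG, g * x * g⁻¹ ∈ PG)
    (PH : Submonoid H) (hPH : ∀ h : H, ∀ x ∈ PH, h * x * h⁻¹ ∈ PH)
    (f : G →* H) (hfsurj : Function.Surjective f) (hfcone : Submonoid.map f PG = PH) :
    StarCond (kerPairCone f PG) (kerPairFst f) ↔ StarCond PG f :=
  stmt5_general PG f
end

section
/- Let f : (G, P_G) → (H, P_H) be a regular epimorphism of preordered groups. Define D_G = {η_G(a)·η_G(b)⁻¹ : a, b ∈ P_G} ⊆ Ab(G) and D_{Eq(f)} = {η_{Eq(f)}(p)·η_{Eq(f)}(q)⁻¹ : p, q ∈ Eq(f)⁺} ⊆ Ab(Eq(f)). The following are equivalent: (1) Ker(f) ⊆ Z(G) (the center of G) and for all x, y ∈ P_G with f(x) = f(y) one has y·x⁻¹ ∈ P_G and x⁻¹·y ∈ P_G; (2) f is a normal (equivalently, central) extension with respect to the reflection of preordered groups onto the category of monomorphisms of abelian groups, explicitly: (a) the group homomorphism θ : Eq(f) → {(g,u) ∈ G × Ab(Eq(f)) : η_G(g)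 = Ab(π₁)(u)} defined by θ(x,y) = (x, η_{Eq(f)}(x,y)) is bijective, and (b) θ restricts to a bijection from Eq(f)⁺ onto {(g,u) : g ∈ P_G, u ∈ D_{Eq(f)}, η_G(g) = Ab(π₁)(u)}. -/
/-- The comparison map `θ : Eq(f) →* G × Ab(Eq(f))`, `θ(x,y) = (x, η(x,y))`,
towards the pullback of `η_G` and `Ab(π₁)`. -/
def thetaMap {G H : Type*} [Group G] [Group H] (f : G →* H) :
    ↥(kerPair f) →* G × Abelianization ↥(kerPair f) :=
  (kerPairFst f).prod Abelianization.of

/-- The subgroup of differences `D_K = {η(p)·η(q)⁻¹ : p, q ∈ cone}` of the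
abelianization, realized here as a subset. -/
def diffSet {K : Type*} [Group K] (C : Submonoid K) : Set (Abelianization K) :=
  {u | ∃ p ∈ C, ∃ q ∈ C, u = Abelianization.of p * (Abelianization.of q)⁻¹}

/-!
The first projection `π₁ : Eq(f) → G` is surjective, so every commutator of `G` lifts to a
commutator of `Eq(f)`; hence `θ` always maps onto the pullback. If `Ker f` is central, then
`(x, y) ↦ x⁻¹ * y` is a homomorphism to an abelian group, so `η (x, y)` determines `x⁻¹ * y` and
`θ` is injective. Conversely `θ` sends `(1, k)`, with `k ∈ Ker f`, and `(g, g)` to commuting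
elements, so injectivity of `θ` forces `k` to commute with `g`.

Once `θ` is injective, the condition on cones says that `(x, y) ∈ Eq(f)` with `x ∈ P_G` and
`η (x, y) ∈ D_{Eq(f)}` has `y ∈ P_G`. The quotients `(x, y) (x, x)⁻¹ = (1, y * x⁻¹)` of positive
pairs show that this forces `y * x⁻¹ ∈ P_G`; conversely, the homomorphism above writes `x⁻¹ * y`
as a product of positive elements.
-/

section Abelianization

variable {K G : Type*} [Group K] [Group G]

theorem of_mem_diffSet {C : Submonoid K} {z : K} (hz : z ∈ C) : Abelianization.of z ∈ diffSet C :=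
  ⟨z, hz, 1, C.one_mem, by simp⟩

theorem range_prod_abelianizationOf {π : K →* G} (hπ : Function.Surjective π) :
    (π.prod Abelianization.of).range =
      pullbackSubgroup Abelianization.of (Abelianization.map π) := by
  apply le_antisymm
  · rintro _ ⟨z, rfl⟩
    exact (Abelianization.map_of π z).symm
  · rintro ⟨g, u⟩ (hgu : Abelianization.of g = Abelianization.map π u)
    obtain ⟨z, rfl⟩ := QuotientGroup.mk_surjective u
    have hcomm : g * (π z)⁻¹ ∈ commutator G := by
      rw [← Abelianization.ker_of, MonoidHom.mem_ker, map_mul, map_inv, hgu]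
      exact mul_inv_cancel _
    obtain ⟨c, hc, hcg⟩ : g * (π z)⁻¹ ∈ (commutator K).map π := by
      rwa [commutator_def, Subgroup.map_commutator, Subgroup.map_top_of_surjective π hπ]
    rw [SetLike.mem_coe, ← Abelianization.ker_of, MonoidHom.mem_ker] at hc
    refine ⟨c * z, Prod.ext ?_ ?_⟩
    · change π (c * z) = g
      rw [map_mul, hcg, inv_mul_cancel_right]
    · change Abelianization.of (c * z) = Abelianization.of z
      rw [map_mul, hc, one_mul]

theorem bijOn_prod_abelianizationOf_iff {π : K →* G} (hπ : Function.Surjective π)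
    (hinj : Function.Injective (π.prod Abelianization.of)) {C : Submonoid K} {P : Submonoid G}
    (hCP : C ≤ P.comap π) :
    Set.BijOn (π.prod Abelianization.of) C
        {z : G × Abelianization K | z.1 ∈ P ∧ z.2 ∈ diffSet C ∧
          Abelianization.of z.1 = Abelianization.map π z.2} ↔
      ∀ z, π z ∈ P → Abelianization.of z ∈ diffSet C → z ∈ C := by
  constructor
  · intro hbij z hzP hzD
    obtain ⟨w, hwC, hwz⟩ := hbij.surjOn (a := (π.prod Abelianization.of) z)
      ⟨hzP, hzD, (Abelianization.map_of π z).symm⟩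
    exact hinj hwz ▸ hwC
  · intro hC
    refine ⟨fun z hz => ⟨hCP hz, of_mem_diffSet hz, (Abelianization.map_of π z).symm⟩,
      hinj.injOn, ?_⟩
    rintro u ⟨huP, huD, hu⟩
    obtain ⟨z, rfl⟩ := (range_prod_abelianizationOf hπ).ge hu
    exact ⟨z, hC z huP huD, rfl⟩

end Abelianization

section KernelPair

open scoped IsMulCommutative

variable {G H : Type*} [Group G] [Group H] (f : G →* H)

/-- The diagonal `G →* Eq(f)`, a common section of the two projections of the kernel pair. -/
def kerPairDiag : G →* kerPair f :=
  ((MonoidHom.id G).prod (MonoidHom.id G)).codRestrict (kerPair f) fun _ => rfl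

theorem kerPairFst_surjective : Function.Surjective (kerPairFst f) :=
  fun g => ⟨kerPairDiag f g, rfl⟩

variable {f}

theorem inv_mul_mem_ker (z : kerPair f) : z.1.1⁻¹ * z.1.2 ∈ f.ker := by
  have hz : f z.1.1 = f z.1.2 := z.2
  rw [MonoidHom.mem_ker, map_mul, map_inv, hz, inv_mul_cancel]

/-- The homomorphism `(x, y) ↦ x⁻¹ * y` from the kernel pair of `f` to the center, available when
`f` has central kernel. Having an abelian target, it factors through the abelianization of
`Eq(f)`. -/
def kerPairInvMul (hf : f.ker ≤ Subgroup.center G) : kerPair f →* Subgroup.center G :=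
  MonoidHom.mk' (fun z => ⟨z.1.1⁻¹ * z.1.2, hf (inv_mul_mem_ker z)⟩) fun z w => Subtype.ext <| by
    have hcomm : w.1.1⁻¹ * (z.1.1⁻¹ * z.1.2) = z.1.1⁻¹ * z.1.2 * w.1.1⁻¹ :=
      Subgroup.mem_center_iff.1 (hf (inv_mul_mem_ker z)) _
    calc (z.1.1 * w.1.1)⁻¹ * (z.1.2 * w.1.2)
        = w.1.1⁻¹ * (z.1.1⁻¹ * z.1.2) * w.1.2 := by group
      _ = z.1.1⁻¹ * z.1.2 * (w.1.1⁻¹ * w.1.2) := by rw [hcomm, mul_assoc]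

theorem thetaMap_injective_iff :
    Function.Injective (thetaMap f) ↔ f.ker ≤ Subgroup.center G := by
  constructor
  · intro hinj k hk
    let κ : kerPair f := ⟨(1, k), (map_one f).trans hk.symm⟩
    refine Subgroup.mem_center_iff.2 fun g => ?_
    have hcomm : Commute (thetaMap f (kerPairDiag f g)) (thetaMap f κ) :=
      Prod.commute_iff.2 ⟨Commute.one_right g, Commute.all _ _⟩
    exact congrArg (fun z : kerPair f => z.1.2) (hcomm.of_map hinj).eq
  · refine fun hf => (injective_iff_map_eq_one _).2 fun z hz => ?_
    obtain ⟨hfst : z.1.1 = 1, hab : Abelianization.of z = 1⟩ := Prod.ext_iff.1 hz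
    have hδ : kerPairInvMul hf z = 1 := by
      rw [← Abelianization.lift_apply_of (kerPairInvMul hf), hab, map_one]
    have hsnd : z.1.1 = z.1.2 := inv_mul_eq_one.1 (congrArg Subtype.val hδ)
    exact Subtype.ext (Prod.ext hfst (hsnd ▸ hfst))

variable {P : Submonoid G}

theorem inv_mul_mem_of_abelianizationOf_mem_diffSet (hf : f.ker ≤ Subgroup.center G)
    (hP : ∀ x ∈ P, ∀ y ∈ P, f x = f y → x⁻¹ * y ∈ P) {z : kerPair f}
    (hz : Abelianization.of z ∈ diffSet (kerPairCone f P)) : z.1.1⁻¹ * z.1.2 ∈ P := by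
  obtain ⟨p, hp, q, hq, hzpq⟩ := hz
  have hδ : kerPairInvMul hf z = kerPairInvMul hf p * (kerPairInvMul hf q)⁻¹ := by
    simpa only [map_mul, map_inv, Abelianization.lift_apply_of] using
      congrArg (Abelianization.lift (kerPairInvMul hf)) hzpq
  have hδ' : z.1.1⁻¹ * z.1.2 = p.1.1⁻¹ * p.1.2 * (q.1.1⁻¹ * q.1.2)⁻¹ := congrArg Subtype.val hδ
  rw [hδ', mul_inv_rev, inv_inv]
  exact P.mul_mem (hP _ hp.1 _ hp.2 p.2) (hP _ hq.2 _ hq.1 q.2.symm)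

theorem mul_inv_mem_of_forall_mem_kerPairCone
    (hP : ∀ z : kerPair f, z.1.1 ∈ P → Abelianization.of z ∈ diffSet (kerPairCone f P) →
      z ∈ kerPairCone f P)
    {x y : G} (hx : x ∈ P) (hy : y ∈ P) (hxy : f x = f y) : y * x⁻¹ ∈ P := by
  let p : kerPair f := ⟨(x, y), hxy⟩
  have hfst : (p * (kerPairDiag f x)⁻¹).1.1 ∈ P := by
    have hone : (p * (kerPairDiag f x)⁻¹).1.1 = 1 := mul_inv_cancel x
    exact hone ▸ P.one_mem
  have hdiff : Abelianization.of (p * (kerPairDiag f x)⁻¹) ∈ diffSet (kerPairCone f P) :=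
    ⟨p, ⟨hx, hy⟩, kerPairDiag f x, ⟨hx, hx⟩, by rw [map_mul, map_inv]⟩
  exact (hP _ hfst hdiff).2

theorem forall_mem_kerPairCone_iff (hconj : ∀ g : G, ∀ x ∈ P, g * x * g⁻¹ ∈ P)
    (hf : f.ker ≤ Subgroup.center G) :
    (∀ z : kerPair f, z.1.1 ∈ P → Abelianization.of z ∈ diffSet (kerPairCone f P) →
        z ∈ kerPairCone f P) ↔
      ∀ x ∈ P, ∀ y ∈ P, f x = f y → y * x⁻¹ ∈ P ∧ x⁻¹ * y ∈ P := by
  constructor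
  · intro hP x hx y hy hxy
    have hmem : y * x⁻¹ ∈ P := mul_inv_mem_of_forall_mem_kerPairCone hP hx hy hxy
    exact ⟨hmem, by simpa [mul_assoc] using hconj x⁻¹ _ hmem⟩
  · intro hP z hz hdiff
    have hmem : z.1.1⁻¹ * z.1.2 ∈ P :=
      inv_mul_mem_of_abelianizationOf_mem_diffSet hf (fun x hx y hy h => (hP x hx y hy h).2) hdiff
    exact ⟨hz, mul_inv_cancel_left z.1.1 z.1.2 ▸ P.mul_mem hz hmem⟩

end KernelPair

theorem stmt13_general {G H : Type*} [Group G] [Group H]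
    (PG : Submonoid G) (hPG : ∀ g : G, ∀ x ∈ PG, g * x * g⁻¹ ∈ PG) (f : G →* H) :
    (f.ker ≤ Subgroup.center G ∧
        ∀ x ∈ PG, ∀ y ∈ PG, f x = f y → y * x⁻¹ ∈ PG ∧ x⁻¹ * y ∈ PG) ↔
      (Function.Injective (thetaMap f) ∧
        Set.range (thetaMap f) =
          {z : G × Abelianization ↥(kerPair f) |
            Abelianization.of z.1 = Abelianization.map (kerPairFst f) z.2} ∧
        Set.BijOn (thetaMap f) (kerPairCone f PG : Set ↥(kerPair f))
          {z : G × Abelianization ↥(kerPair f) |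
            z.1 ∈ PG ∧ z.2 ∈ diffSet (kerPairCone f PG) ∧
            Abelianization.of z.1 = Abelianization.map (kerPairFst f) z.2}) := by
  rw [← thetaMap_injective_iff]
  refine and_congr_right fun hinj => ?_
  have hrange : Set.range (thetaMap f) = {z : G × Abelianization ↥(kerPair f) |
      Abelianization.of z.1 = Abelianization.map (kerPairFst f) z.2} :=
    congrArg SetLike.coe (range_prod_abelianizationOf (kerPairFst_surjective f))
  rw [and_iff_right hrange, ← forall_mem_kerPairCone_iff hPG (thetaMap_injective_iff.1 hinj)]
  have hcone : kerPairCone f PG ≤ PG.comap (kerPairFst f) := fun _ hz => hz.1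
  exact (bijOn_prod_abelianizationOf_iff (kerPairFst_surjective f) hinj hcone).symm

/-- a regular epimorphism `f : (G,P_G) → (H,P_H)` of preordered groups
is a normal (equivalently central) extension for the reflection onto monomorphisms of
abelian groups if and only if `Ker f ⊆ Z(G)` and the restriction of `f` to the cones
is a special homogeneous surjection (`f x = f y` with `x, y ∈ P_G` implies
`y·x⁻¹ ∈ P_G` and `x⁻¹·y ∈ P_G`). -/
theorem stmt13 {G H : Type*} [Group G] [Group H]
    (PG : Submonoid G) (hPG : ∀ g : G, ∀ x ∈ PG, g * x * g⁻¹ ∈ PG)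
    (PH : Submonoid H) (hPH : ∀ h : H, ∀ x ∈ PH, h * x * h⁻¹ ∈ PH)
    (f : G →* H) (hfsurj : Function.Surjective f) (hfcone : Submonoid.map f PG = PH) :
    (f.ker ≤ Subgroup.center G ∧
        ∀ x ∈ PG, ∀ y ∈ PG, f x = f y → y * x⁻¹ ∈ PG ∧ x⁻¹ * y ∈ PG) ↔
      (Function.Injective (thetaMap f) ∧
        Set.range (thetaMap f) =
          {z : G × Abelianization ↥(kerPair f) |
            Abelianization.of z.1 = Abelianization.map (kerPairFst f) z.2} ∧
        Set.BijOn (thetaMap f) (kerPairCone f PG : Set ↥(kerPair f))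
          {z : G × Abelianization ↥(kerPair f) |
            z.1 ∈ PG ∧ z.2 ∈ diffSet (kerPairCone f PG) ∧
            Abelianization.of z.1 = Abelianization.map (kerPairFst f) z.2}) :=
  stmt13_general PG hPG f
end
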